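/- Let ℓ ≤ n and let S_ℓ ≤ S_n be the subgroup of permutations fixing each of ℓ+1,…,n. Then for every g ∈ S_n, either ν₂(g,χ) = 0 for all irreducible complex characters χ of S(g) = S_ℓ ∩ g S_ℓ g⁻¹, or ν₂(g,χ) = 1 for all such χ. -/

import Mathlib

open scoped BigOperators Pointwise Classical
open CategoryTheory

/-- For `H ≤ G` and `g ∈ G`, the stabilizer `S(g) = Stab_H(gH) = H ∩ gHg⁻¹`. -/
def stabCoset {G : Type*} [Group G] (H : Subgroup G) (g : G) : Subgroup G :=
  H ⊓ Subgroup.map (MulAut.conj g).toMonoidHom H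

/-- The `m`-th Frobenius–Schur indicator `ν_m(g,χ)` of the simple object of the
group-theoretical fusion category `C(G,H)` attached to `(g,χ)`:
`ν_m(g,χ) = (1/|S(g)|) Σ_{x ∈ H, (gx)^m ∈ H} conj(χ((gx)^m))`
(recall that for `x ∈ H`, `(gx)^m ∈ H` iff `(gx)^m ∈ S(g)`). -/
noncomputable def nuInd {G : Type*} [Group G] (H : Subgroup G) (g : G) (m : ℕ)
    (χ : ↥(stabCoset H g) → ℂ) : ℂ :=
  (Nat.card ↥(stabCoset H g) : ℂ)⁻¹ *
    ∑ᶠ x : G, if h : x ∈ H ∧ (g * x) ^ m ∈ stabCoset H g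
      then (starRingEnd ℂ) (χ ⟨(g * x) ^ m, h.2⟩) else 0

/-- The classical second Frobenius–Schur indicator `ν₂(θ) = (1/|K|) Σ_{x∈K} θ(x²)`. -/
noncomputable def fsInd {K : Type*} [Group K] (θ : K → ℂ) : ℂ :=
  (Nat.card K : ℂ)⁻¹ * ∑ᶠ x : K, θ (x ^ 2)

/-- The copy of `S_ℓ` inside `S_n`: permutations of `{1,…,n}` (0-indexed as `Fin n`)
fixing each of the points `ℓ+1,…,n` (0-indexed: the points with index `≥ ℓ`). -/
def fixSubgroup (n ℓ : ℕ) : Subgroup (Equiv.Perm (Fin n)) where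
  carrier := {σ | ∀ i : Fin n, ℓ ≤ (i : ℕ) → σ i = i}
  one_mem' := fun _ _ => rfl
  mul_mem' := by
    intro a b ha hb i hi
    simp only [Equiv.Perm.mul_apply, hb i hi, ha i hi]
  inv_mem' := by
    intro a ha i hi
    simp only [Set.mem_setOf_eq] at *
    exact (Equiv.symm_apply_eq a).mpr (ha i hi).symm

/-!
Let `H` be the pointwise fixing subgroup of `T`, so that `S(g)` is the one of `B = T ∪ g • T`.
If `(gx)² ∈ S(g)` for no `x ∈ H`, every indicator vanishes. Otherwise some `gx` restricts to an
involution of `B`; extended by the identity this becomes `t ∈ gH` with `t² = 1`, whose support is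
disjoint from that of every element of `S(g)`. In terms of `gx = ts`, the `x` that contribute to
`ν₂(g,χ)` are those with `s ∈ S(g)`, and then `(gx)² = s²`: so `ν₂(g,χ)` is the complex conjugate
of the classical indicator of `χ`.

It remains to see that symmetric groups have classical indicators `1`. As every element is conjugate
to its inverse, this amounts to the symmetry of every invariant bilinear form `B` on an irreducible
representation `V`, which is proved by induction from `K = S_{m-1}` to `G = S_m`. Every `g ∈ G` is
inverted by conjugation by some element of `K`, so the `K`-average of `g` is self-adjoint for any
invariant form; since the group algebra maps onto `End(V)`, so is every `K`-endomorphism of `V`.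
Let `D(x, y) = B(x, y) - B(y, x)`, let `W` be a simple `K`-subrepresentation of `V` and `P` a
`K`-equivariant projection onto `W`. Then `D` vanishes on `W` by induction, so for `w ∈ W` we get
`D(w, v) = D(Pw, v) = D(w, Pv) = 0`. The radical of `D` is thus nonzero, hence all of `V`.
-/

section GroupTheory

variable {G : Type*} [Group G] {H : Subgroup G} {g t : G}

theorem mem_stabCoset_iff_of_involution (ht : g⁻¹ * t ∈ H) (htt : t * t = 1) {s : G} :
    s ∈ stabCoset H g ↔ s ∈ H ∧ t * s * t ∈ H := by
  have conj_eq : g⁻¹ * s * g = g⁻¹ * t * (t * s * t) * (g⁻¹ * t)⁻¹ := by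
    rw [mul_inv_rev, inv_inv, inv_eq_of_mul_eq_one_left htt]
    calc g⁻¹ * s * g = g⁻¹ * 1 * s * 1 * g := by group
      _ = g⁻¹ * (t * t) * s * (t * t) * g := by rw [htt]
      _ = g⁻¹ * t * (t * s * t) * (t * g) := by group
  rw [stabCoset, Subgroup.mem_inf, Subgroup.mem_map_equiv, MulAut.conj_symm_apply, conj_eq,
    Subgroup.mul_mem_cancel_right H (inv_mem ht), Subgroup.mul_mem_cancel_left H ht]

theorem mul_sq_mem_stabCoset_iff (ht : g⁻¹ * t ∈ H) (htt : t * t = 1)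
    (hcomm : ∀ s ∈ stabCoset H g, Commute t s) {s : G} (hs : s ∈ H) :
    (t * s) ^ 2 ∈ stabCoset H g ↔ s ∈ stabCoset H g := by
  constructor
  · intro h
    have : t * s * t * s ∈ H := by
      simpa only [sq, mul_assoc] using (Subgroup.mem_inf.1 h).1
    exact (mem_stabCoset_iff_of_involution ht htt).2 ⟨hs, (H.mul_mem_cancel_right hs).1 this⟩
  · intro h
    rw [(hcomm s h).mul_pow, sq t, htt, one_mul]
    exact pow_mem h 2

theorem range_involution_mul_stabCoset (ht : g⁻¹ * t ∈ H) (htt : t * t = 1)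
    (hcomm : ∀ s ∈ stabCoset H g, Commute t s) :
    Set.range (fun s : stabCoset H g => g⁻¹ * t * (s : G)) =
      {x | x ∈ H ∧ (g * x) ^ 2 ∈ stabCoset H g} := by
  ext x
  obtain ⟨s, rfl⟩ : ∃ s, x = g⁻¹ * t * s := ⟨(g⁻¹ * t)⁻¹ * x, by group⟩
  have : g * (g⁻¹ * t * s) = t * s := by group
  simp only [Set.mem_range, mul_right_inj, Subtype.exists, exists_prop, exists_eq_right,
    Set.mem_ofPred_eq, this, H.mul_mem_cancel_left ht]
  exact ⟨fun hs => ⟨hs.1, (mul_sq_mem_stabCoset_iff ht htt hcomm hs.1).2 hs⟩,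
    fun hs => (mul_sq_mem_stabCoset_iff ht htt hcomm hs.1).1 hs.2⟩

theorem nuInd_two_eq_conj_fsInd (ht : g⁻¹ * t ∈ H) (htt : t * t = 1)
    (hcomm : ∀ s ∈ stabCoset H g, Commute t s) (χ : stabCoset H g → ℂ) :
    nuInd H g 2 χ = starRingEnd ℂ (fsInd χ) := by
  have hrange := range_involution_mul_stabCoset ht htt hcomm
  have mul_sq (s : stabCoset H g) : (g * (g⁻¹ * t * s)) ^ 2 = (s ^ 2 : stabCoset H g) := by
    rw [mul_assoc, mul_inv_cancel_left, (hcomm s s.2).mul_pow, sq t, htt, one_mul]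
    rfl
  have conj_finsum : starRingEnd ℂ (∑ᶠ s, χ (s ^ 2)) = ∑ᶠ s, starRingEnd ℂ (χ (s ^ 2)) :=
    AddEquiv.map_finsum (starRingAut (R := ℂ)).toAddEquiv _
  rw [nuInd, fsInd, map_mul, map_inv₀, map_natCast, conj_finsum, ← finsum_mem_univ,
    finsum_mem_inter_support_eq _ _ (Set.range fun s : stabCoset H g => g⁻¹ * t * (s : G)),
    finsum_mem_range fun _ _ h => Subtype.ext (mul_left_cancel h)]
  · refine congrArg _ (finsum_congr fun s => ?_)
    exact (dif_pos (hrange.subset ⟨s, rfl⟩)).trans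
      (congrArg _ (congrArg χ (Subtype.ext (mul_sq s))))
  · rw [hrange, Set.univ_inter, eq_comm, Set.inter_eq_right]
    exact fun x hx => of_not_not fun h => hx (dif_neg h)

theorem nuInd_eq_zero {m : ℕ} (h : ∀ x ∈ H, (g * x) ^ m ∉ stabCoset H g)
    (χ : stabCoset H g → ℂ) : nuInd H g m χ = 0 := by
  have hzero : ∀ x : G, ¬ (x ∈ H ∧ (g * x) ^ m ∈ stabCoset H g) := fun x hx => h x hx.1 hx.2
  simp only [nuInd, hzero, dite_false, finsum_zero, mul_zero]

end GroupTheory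

section Permutations

variable {α : Type*}

theorem stabCoset_fixingSubgroup {M : Type*} [Group M] [MulAction M α] (T : Set α) (g : M) :
    stabCoset (fixingSubgroup M T) g = fixingSubgroup M (T ∪ g • T) := by
  rw [stabCoset, fixingSubgroup_union,
    SubMulAction.fixingSubgroup_smul_eq_fixingSubgroup_map_conj]

theorem exists_involution_eqOn {y : Equiv.Perm α} {B : Set α} (hB : ∀ i ∈ B, y i ∈ B)
    (hy : y ^ 2 ∈ fixingSubgroup (Equiv.Perm α) B) :
    ∃ t : Equiv.Perm α, t * t = 1 ∧ Set.EqOn t y B ∧ ∀ i ∉ B, t i = i := by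
  have hyy : ∀ i ∈ B, y (y i) = i := fun i hi => by
    simpa only [sq, Equiv.Perm.smul_def, Equiv.Perm.mul_apply] using
      (mem_fixingSubgroup_iff _).1 hy i hi
  have hmem (i : α) : y i ∈ B ↔ i ∈ B :=
    ⟨fun hi => y.injective (hyy (y i) hi) ▸ hB _ hi, hB i⟩
  refine ⟨.ofSubtype (y.subtypePerm hmem), ?_, fun i hi => ?_, fun i hi => ?_⟩
  · rw [← map_mul, map_eq_one_iff _ Equiv.Perm.ofSubtype_injective]
    ext i
    exact hyy i i.2
  · exact Equiv.Perm.ofSubtype_apply_of_mem _ hi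
  · exact Equiv.Perm.ofSubtype_apply_of_not_mem _ hi

theorem exists_involution_centralizing_stabCoset {T : Set α} {g x : Equiv.Perm α}
    (hx : x ∈ fixingSubgroup (Equiv.Perm α) T)
    (hgx : (g * x) ^ 2 ∈ stabCoset (fixingSubgroup (Equiv.Perm α) T) g) :
    ∃ t : Equiv.Perm α, g⁻¹ * t ∈ fixingSubgroup (Equiv.Perm α) T ∧ t * t = 1 ∧
      ∀ s ∈ stabCoset (fixingSubgroup (Equiv.Perm α) T) g, Commute t s := by
  rw [stabCoset_fixingSubgroup] at hgx ⊢
  have eq_on_T : ∀ i ∈ T, (g * x) i = g i := fun i hi =>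
    congrArg g ((mem_fixingSubgroup_iff _).1 hx i hi)
  have hB : ∀ i ∈ T ∪ g • T, (g * x) i ∈ T ∪ g • T := by
    rintro _ (hi | ⟨i, hi, rfl⟩)
    · exact .inr ⟨_, hi, (eq_on_T _ hi).symm⟩
    · have := (mem_fixingSubgroup_iff _).1 hgx i (.inl hi)
      rw [sq, Equiv.Perm.smul_def, Equiv.Perm.mul_apply, eq_on_T i hi] at this
      exact .inl (this.symm ▸ hi)
  obtain ⟨t, htt, ht_on, ht_off⟩ := exists_involution_eqOn hB hgx
  refine ⟨t, (mem_fixingSubgroup_iff _).2 fun i hi => ?_, htt, fun s hs => ?_⟩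
  · rw [Equiv.Perm.smul_def, Equiv.Perm.mul_apply, ht_on (.inl hi), eq_on_T i hi]
    exact g.symm_apply_apply i
  · refine Equiv.Perm.Disjoint.commute fun i => ?_
    by_cases hi : i ∈ T ∪ g • T
    · exact .inr ((mem_fixingSubgroup_iff _).1 hs i hi)
    · exact .inl (ht_off i hi)

theorem exists_representative_eqOn_id {s : Setoid α} {A : Set α}
    (hA : A.Pairwise fun x y => ¬ s x y) :
    ∃ r : α → α, (∀ x, s (r x) x) ∧ (∀ x y, s x y → r x = r y) ∧ Set.EqOn r id A := by
  let mkA : A → Quotient s := fun a => Quotient.mk s a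
  have mkA_injective : mkA.Injective := fun a b hab =>
    Subtype.ext (hA.eq a.2 b.2 (not_not.2 (Quotient.exact hab)))
  let out : Quotient s → α := Function.extend mkA Subtype.val Quotient.out
  have mk_out (q : Quotient s) : Quotient.mk s (out q) = q := by
    by_cases hq : ∃ a, mkA a = q
    · obtain ⟨a, rfl⟩ := hq
      exact congrArg (Quotient.mk s) (mkA_injective.extend_apply _ _ a)
    · exact (congrArg _ (Function.extend_apply' _ _ _ hq)).trans (Quotient.out_eq q)
  exact ⟨fun x => out (Quotient.mk s x), fun x => Quotient.exact (mk_out (Quotient.mk s x)),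
    fun x y hxy => congrArg out (Quotient.sound hxy),
    fun a ha => mkA_injective.extend_apply _ _ (⟨a, ha⟩ : A)⟩

-- On each cycle, the conjugator is the reflection about the chosen representative.
theorem exists_mem_fixingSubgroup_conj_eq_inv {g : Equiv.Perm α} {A : Set α}
    (hA : A.Pairwise fun x y => ¬ g.SameCycle x y) :
    ∃ h ∈ fixingSubgroup (Equiv.Perm α) A, h * g * h⁻¹ = g⁻¹ := by
  obtain ⟨r, hr, hr_eq, hrA⟩ :=
    exists_representative_eqOn_id (s := Equiv.Perm.SameCycle.setoid g) hA
  choose k hk using hr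
  let h : α → α := fun x => (g ^ (-k x)) (r x)
  have h_zpow (x : α) (m : ℤ) (hm : (g ^ m) (r x) = x) : h x = (g ^ (-m)) (r x) := calc
    (g ^ (-k x)) (r x) = (g ^ (-m)) ((g ^ (-k x)) ((g ^ m) (r x))) := by
      simp only [← Equiv.Perm.mul_apply, ← zpow_add, neg_add_cancel_comm_assoc]
    _ = (g ^ (-m)) ((g ^ (-k x)) ((g ^ k x) (r x))) := by rw [hm, hk]
    _ = (g ^ (-m)) (r x) := by
      simp only [← Equiv.Perm.mul_apply, ← zpow_add, neg_add_cancel, add_zero]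
  have r_zpow (x : α) (m : ℤ) : r ((g ^ m) x) = r x := (hr_eq x _ ⟨m, rfl⟩).symm
  have r_h (x : α) : r (h x) = r x := (r_zpow (r x) _).trans (hr_eq _ _ ⟨k x, hk x⟩)
  have h_involutive : h.Involutive := fun x => by
    rw [h_zpow (h x) (-k x) (by rw [r_h]), neg_neg, r_h, hk]
  have h_apply (x : α) : h (g x) = g⁻¹ (h x) := by
    have r_apply : r (g x) = r x := r_zpow x 1
    rw [h_zpow (g x) (1 + k x) (by rw [r_apply, zpow_one_add, Equiv.Perm.mul_apply, hk]),
      r_apply, neg_add, zpow_add, zpow_neg_one, Equiv.Perm.mul_apply]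
  refine ⟨h_involutive.toPerm, (mem_fixingSubgroup_iff _).2 fun a ha => ?_, ?_⟩
  · have ra : r a = a := hrA ha
    simpa [ra] using h_zpow a 0 (by simpa using ra)
  · exact mul_inv_eq_iff_eq_mul.2 (Equiv.ext h_apply)

theorem pairwise_not_sameCycle_of_mem_fixingSubgroup {g : Equiv.Perm α} {A T : Set α}
    (hg : g ∈ fixingSubgroup (Equiv.Perm α) T) (hA : (A \ T).Subsingleton) :
    A.Pairwise fun x y => ¬ g.SameCycle x y := by
  have eq_of_sameCycle : ∀ x ∈ T, ∀ y, g.SameCycle x y → x = y := fun x hx y hxy =>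
    hxy.eq_of_left ((mem_fixingSubgroup_iff _).1 hg x hx)
  intro x hx y hy hne hxy
  by_cases hxT : x ∈ T
  · exact hne (eq_of_sameCycle x hxT y hxy)
  by_cases hyT : y ∈ T
  · exact hne (eq_of_sameCycle y hyT x hxy.symm).symm
  · exact hne (hA ⟨hx, hxT⟩ ⟨hy, hyT⟩)

theorem isConj_inv_fixingSubgroup {T : Set α} (g : fixingSubgroup (Equiv.Perm α) T) :
    IsConj g g⁻¹ := by
  have sdiff_subsingleton : (T \ T).Subsingleton := Set.sdiff_self ▸ Set.subsingleton_empty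
  obtain ⟨h, hh, hg⟩ := exists_mem_fixingSubgroup_conj_eq_inv
    (pairwise_not_sameCycle_of_mem_fixingSubgroup g.2 sdiff_subsingleton)
  exact isConj_iff.2 ⟨⟨h, hh⟩, Subtype.ext hg⟩

theorem finite_fixingSubgroup_perm {T : Set α} (hT : Tᶜ.Finite) :
    Finite (fixingSubgroup (Equiv.Perm α) T) := by
  have : Finite {i // i ∉ T} := hT
  let restrict := (Equiv.Perm.subtypeEquivSubtypePerm (· ∉ T)).symm
  exact Finite.of_injective
    (fun σ : fixingSubgroup (Equiv.Perm α) T =>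
      restrict ⟨σ, fun i hi => (mem_fixingSubgroup_iff _).1 σ.2 i (not_not.1 hi)⟩)
    fun _ _ h => Subtype.ext (Subtype.mk.inj (restrict.injective h))

end Permutations

section Representations

universe w

open Representation

variable {k M G K V : Type*} [Field k] [Monoid M] [Group G] [Group K] [AddCommGroup V] [Module k V]

theorem asAlgebraHom_surjective_of_isIrreducible [IsAlgClosed k] [FiniteDimensional k V]
    (ρ : Representation k M V) [ρ.IsIrreducible] : Function.Surjective ρ.asAlgebraHom := by
  intro f
  let A := Module.End (MonoidAlgebra k M) ρ.asModule
  have hscalar : Function.Bijective (algebraMap k A) :=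
    IsSimpleModule.algebraMap_end_bijective_of_isAlgClosed k
  have : Module.Finite A ρ.asModule := .of_restrictScalars_finite k A ρ.asModule
  let F : Module.End A ρ.asModule :=
    { toFun := f
      map_add' := map_add f
      map_smul' := fun a x => by
        obtain ⟨c, rfl⟩ := hscalar.2 a
        exact map_smul f c x }
  obtain ⟨r, hr⟩ := Module.Finite.toModuleEnd_moduleEnd_surjective F
  exact ⟨r, LinearMap.ext fun v => LinearMap.congr_fun hr v⟩

/-- `D` is a `G`-invariant bilinear form on the representation space of `ρ`; it may be degenerate,
and no symmetry is assumed. -/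
def IsInvariantForm (ρ : Representation k G V) (D : LinearMap.BilinForm k V) : Prop :=
  ∀ g x y, D (ρ g x) (ρ g y) = D x y

namespace IsInvariantForm

variable {ρ : Representation k G V} {D : LinearMap.BilinForm k V}

theorem apply_left (hD : IsInvariantForm ρ D) (g : G) (x y : V) :
    D (ρ g x) y = D x (ρ g⁻¹ y) := by
  rw [← hD g x, self_inv_apply]

theorem sub_flip (hD : IsInvariantForm ρ D) : IsInvariantForm ρ (D - D.flip) := fun g x y => by
  simp only [LinearMap.sub_apply, LinearMap.BilinForm.flip_apply, hD g]

theorem eq_zero_of_apply_eq_zero [ρ.IsIrreducible] (hD : IsInvariantForm ρ D) {w : V}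
    (hw : w ≠ 0) (hDw : D w = 0) : D = 0 := by
  let radical : Subrepresentation ρ :=
    { toSubmodule := LinearMap.ker D
      apply_mem_toSubmodule := fun g x (hx : D x = 0) => LinearMap.ext fun y => by
        rw [hD.apply_left, hx, LinearMap.zero_apply, LinearMap.zero_apply] }
  have radical_eq_top : radical = ⊤ := (eq_bot_or_eq_top radical).resolve_left fun h =>
    hw (show w ∈ (⊥ : Subrepresentation ρ) from h ▸ hDw)
  exact LinearMap.ext fun v => show v ∈ radical from radical_eq_top ▸ Submodule.mem_top

-- The conjugates of `g` that are averaged form a family stable under inversion.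
theorem averageMap_mem_selfAdjointSubmodule [Fintype K] [Invertible (Fintype.card K : k)]
    (hD : IsInvariantForm ρ D) {ι : K →* G} {g : G} (hg : ∃ h, ι h * g * (ι h)⁻¹ = g⁻¹) :
    averageMap (linHom (ρ.comp ι) (ρ.comp ι)) (ρ g) ∈ D.selfAdjointSubmodule := by
  obtain ⟨h, hh⟩ := hg
  have average_apply (x : V) : averageMap (linHom (ρ.comp ι) (ρ.comp ι)) (ρ g) x =
      ⅟(Fintype.card K : k) • ∑ l : K, ρ (ι l * g * (ι l)⁻¹) x := by
    simp [GroupAlgebra.average, map_sum]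
  have sum_inv (y : V) : ∑ l : K, ρ (ι l * g * (ι l)⁻¹)⁻¹ y = ∑ l : K, ρ (ι l * g * (ι l)⁻¹) y := by
    rw [← Equiv.sum_comp (Equiv.mulRight h) fun l => ρ (ι l * g * (ι l)⁻¹) y]
    refine Finset.sum_congr rfl fun l _ => congrArg (ρ · y) ?_
    rw [Equiv.coe_mulRight, map_mul, conj_inv, ← hh]
    group
  intro x y
  simp only [average_apply, map_smul, LinearMap.smul_apply, map_sum, LinearMap.sum_apply,
    hD.apply_left, ← sum_inv y]

theorem mem_selfAdjointSubmodule_of_intertwining [IsAlgClosed k] [FiniteDimensional k V]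
    [ρ.IsIrreducible] [Finite K] [NeZero (Nat.card K : k)] (hD : IsInvariantForm ρ D) {ι : K →* G}
    (hι : ∀ g, ∃ h, ι h * g * (ι h)⁻¹ = g⁻¹) (f : IntertwiningMap (ρ.comp ι) (ρ.comp ι)) :
    f.toLinearMap ∈ D.selfAdjointSubmodule := by
  have := Fintype.ofFinite K
  have : Invertible (Fintype.card K : k) :=
    invertibleOfNonzero (Nat.card_eq_fintype_card (α := K) ▸ NeZero.ne (Nat.card K : k))
  let average := averageMap (linHom (ρ.comp ι) (ρ.comp ι))
  have average_mem (r : MonoidAlgebra k G) :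
      average (ρ.asAlgebraHom r) ∈ D.selfAdjointSubmodule := by
    induction r using MonoidAlgebra.induction_linear with
    | zero => simp only [map_zero, zero_mem]
    | add a b ha hb => simpa only [map_add] using add_mem ha hb
    | single g c =>
      rw [asAlgebraHom_single, map_smul]
      exact Submodule.smul_mem _ c (hD.averageMap_mem_selfAdjointSubmodule (hι g))
  obtain ⟨r, hr⟩ := asAlgebraHom_surjective_of_isIrreducible ρ f.toLinearMap
  have average_f : average f.toLinearMap = f.toLinearMap :=
    averageMap_id _ _ ((invariantsEquivIntertwiningMap _ _).symm f).2
  exact average_f ▸ hr ▸ average_mem r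

end IsInvariantForm

theorem isIrreducible_toRepresentation {σ : Representation k M V} {W : Subrepresentation σ}
    (hW : IsAtom W) : W.toRepresentation.IsIrreducible := by
  let image (U : Subrepresentation W.toRepresentation) : Subrepresentation σ :=
    { toSubmodule := U.toSubmodule.map W.toSubmodule.subtype
      apply_mem_toSubmodule := by
        rintro g _ ⟨u, hu, rfl⟩
        exact ⟨W.toRepresentation g u, U.apply_mem_toSubmodule g hu, rfl⟩ }
  have image_injective : image.Injective := fun U U' h =>
    Subrepresentation.toSubmodule_injective <|
      Submodule.map_injective_of_injective W.toSubmodule.subtype_injective <|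
        congrArg Subrepresentation.toSubmodule h
  have image_bot : image ⊥ = ⊥ :=
    Subrepresentation.toSubmodule_injective (Submodule.map_bot _)
  have image_top : image ⊤ = W :=
    Subrepresentation.toSubmodule_injective (Submodule.map_subtype_top _)
  have image_le (U) : image U ≤ W := Submodule.map_subtype_le _ U.toSubmodule
  have : Nontrivial (Subrepresentation W.toRepresentation) :=
    ⟨⊥, ⊤, fun h => hW.1 (by rw [← image_top, ← h, image_bot])⟩
  refine ⟨fun U => (hW.le_iff.1 (image_le U)).imp (fun h => ?_) (fun h => ?_)⟩
  · exact image_injective (h.trans image_bot.symm)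
  · exact image_injective (h.trans image_top.symm)

theorem exists_isAtom_subrepresentation [FiniteDimensional k V] [Nontrivial V]
    (σ : Representation k M V) : ∃ W : Subrepresentation σ, IsAtom W := by
  have toSubmodule_strictMono : StrictMono (Subrepresentation.toSubmodule (ρ := σ)) :=
    fun _ _ h => h
  have := toSubmodule_strictMono.wellFoundedLT
  have : IsAtomic (Subrepresentation σ) := isAtomic_of_orderBot_wellFounded_lt wellFounded_lt
  have : Nontrivial (Subrepresentation σ) := ⟨⊥, ⊤, fun h =>
    bot_ne_top (α := Submodule k V) (congrArg Subrepresentation.toSubmodule h)⟩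
  exact IsAtomic.exists_atom _

theorem exists_intertwining_projection [Finite K] [NeZero (Nat.card K : k)]
    {σ : Representation k K V} (W : Subrepresentation σ) :
    ∃ P : IntertwiningMap σ σ, (∀ v, P v ∈ W) ∧ ∀ w ∈ W, P w = w := by
  obtain ⟨p, hp⟩ := MonoidAlgebra.exists_leftInverse_of_injective W.asSubmodule.subtype
    W.asSubmodule.ker_subtype
  exact ⟨(IntertwiningMap.equivLinearMapAsModule σ σ).symm (W.asSubmodule.subtype ∘ₗ p),
    fun v => (p v).2, fun w hw => congrArg Subtype.val (LinearMap.congr_fun hp ⟨w, hw⟩)⟩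

/-- Every `G`-invariant bilinear form on a finite-dimensional irreducible representation of `G`
over `k` is symmetric: none of these representations is of symplectic type. The representation
spaces range over one fixed universe. -/
def InvariantFormsSymmetric (k G : Type*) [Field k] [Group G] : Prop :=
  ∀ (V : Type w) [AddCommGroup V] [Module k V] [FiniteDimensional k V] (ρ : Representation k G V)
    [ρ.IsIrreducible] (B : LinearMap.BilinForm k V), IsInvariantForm ρ B → B.IsSymm

theorem invariantFormsSymmetric_of_isMulCommutative [IsAlgClosed k] [IsMulCommutative G] :
    InvariantFormsSymmetric.{w} k G := by
  intro V _ _ _ ρ _ B _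
  obtain ⟨v, -, hv⟩ := finrank_eq_one_iff'.1
    (IsIrreducible.finrank_eq_one_of_isMulCommutative ρ)
  refine ⟨fun x y => ?_⟩
  obtain ⟨a, rfl⟩ := hv x
  obtain ⟨b, rfl⟩ := hv y
  simp only [map_smul, LinearMap.smul_apply, smul_eq_mul]
  ring

theorem InvariantFormsSymmetric.of_inverting_hom [IsAlgClosed k] [Finite K]
    [NeZero (Nat.card K : k)] (hK : InvariantFormsSymmetric.{w} k K) (ι : K →* G)
    (hι : ∀ g, ∃ h, ι h * g * (ι h)⁻¹ = g⁻¹) : InvariantFormsSymmetric.{w} k G := by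
  intro V _ _ _ ρ _ B hB
  have : Nontrivial V := IsSimpleModule.nontrivial (MonoidAlgebra k G) ρ.asModule
  have hD := hB.sub_flip
  set D := B - B.flip
  obtain ⟨W, hW⟩ := exists_isAtom_subrepresentation (ρ.comp ι)
  have := isIrreducible_toRepresentation hW
  have D_eq_zero_on_W : ∀ x ∈ W, ∀ y ∈ W, D x y = 0 := fun x hx y hy =>
    let BW : LinearMap.BilinForm k W.toSubmodule := B.restrict W.toSubmodule
    have BW_symm : BW.IsSymm := hK _ W.toRepresentation BW fun h u v => hB (ι h) u v
    sub_eq_zero.2 (BW_symm.eq ⟨x, hx⟩ ⟨y, hy⟩)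
  obtain ⟨P, P_mem, P_eq⟩ := exists_intertwining_projection W
  obtain ⟨w, hw, hw0⟩ := (Submodule.ne_bot_iff W.toSubmodule).1 fun h =>
    hW.1 (Subrepresentation.toSubmodule_injective h)
  have D_w : D w = 0 := LinearMap.ext fun v => calc
    D w v = D (P w) v := by rw [P_eq w hw]
    _ = D w (P v) := hD.mem_selfAdjointSubmodule_of_intertwining hι P w v
    _ = 0 := D_eq_zero_on_W w hw _ (P_mem v)
  have D_eq_zero : D = 0 := hD.eq_zero_of_apply_eq_zero hw0 D_w
  exact ⟨fun x y => sub_eq_zero.1 (LinearMap.congr_fun₂ D_eq_zero x y)⟩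

theorem isInvariantForm_sum_translates [Fintype G] (ρ : Representation k G V)
    (Λ : LinearMap.BilinForm k V) : IsInvariantForm ρ (∑ g, Λ.compl₁₂ (ρ g) (ρ g)) := by
  intro h x y
  simp only [LinearMap.sum_apply, LinearMap.compl₁₂_apply, ← Module.End.mul_apply, ← map_mul]
  exact Equiv.sum_comp (Equiv.mulRight h) fun g => Λ (ρ g x) (ρ g y)

theorem sum_character_sq_eq_sum_sq_character [Fintype G] [FiniteDimensional k V]
    (ρ : Representation k G V)
    (hρ : ∀ B : LinearMap.BilinForm k V, IsInvariantForm ρ B → B.IsSymm) :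
    ∑ g, ρ.character (g ^ 2) = ∑ g, ρ.character g ^ 2 := by
  let b := Module.finBasis k V
  let A (g : G) : Matrix _ _ k := LinearMap.toMatrix b b (ρ g)
  have character_eq (g : G) : ρ.character g = ∑ i, A g i i :=
    LinearMap.trace_eq_matrix_trace k b (ρ g)
  have A_sq (g : G) : A (g ^ 2) = A g * A g := by
    rw [sq, ← LinearMap.toMatrix_mul, ← map_mul]
  have sum_symm (i j) : ∑ g, A g i j * A g j i = ∑ g, A g i i * A g j j := by
    have := (hρ _ (isInvariantForm_sum_translates ρ
      (.linMulLin (b.coord i) (b.coord j)))).eq (b j) (b i)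
    simpa [A, LinearMap.toMatrix_apply] using this
  calc ∑ g, ρ.character (g ^ 2)
    _ = ∑ g, ∑ i, ∑ j, A g i j * A g j i := by simp only [character_eq, A_sq, Matrix.mul_apply]
    _ = ∑ i, ∑ j, ∑ g, A g i j * A g j i := Finset.sum_comm_cycle.symm
    _ = ∑ i, ∑ j, ∑ g, A g i i * A g j j :=
      Fintype.sum_congr _ _ fun i => Fintype.sum_congr _ _ (sum_symm i)
    _ = ∑ g, ∑ i, ∑ j, A g i i * A g j j := Finset.sum_comm_cycle
    _ = ∑ g, ρ.character g ^ 2 := by simp only [character_eq, sq, Finset.sum_mul_sum]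

theorem fsInd_character_eq_one [Finite G] {V : Type*} [AddCommGroup V] [Module ℂ V]
    [FiniteDimensional ℂ V] (ρ : Representation ℂ G V) [ρ.IsIrreducible]
    (hG : ∀ g : G, IsConj g g⁻¹)
    (hρ : ∀ B : LinearMap.BilinForm ℂ V, IsInvariantForm ρ B → B.IsSymm) :
    fsInd ρ.character = 1 := by
  have := Fintype.ofFinite G
  have : Invertible (Nat.card G : ℂ) := invertibleOfNonzero (NeZero.ne _)
  have character_inv (g : G) : ρ.character g⁻¹ = ρ.character g := by
    obtain ⟨c, hc⟩ := isConj_iff.1 (hG g)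
    rw [← hc, char_conj]
  calc fsInd ρ.character
    _ = (Nat.card G : ℂ)⁻¹ * ∑ g, ρ.character g * ρ.character g⁻¹ := by
      rw [fsInd, finsum_eq_sum_of_fintype, sum_character_sq_eq_sum_sq_character ρ hρ]
      simp only [character_inv, sq]
    _ = 1 := (char_orthonormal ρ ρ).trans (if_pos ⟨.refl _⟩)

theorem isIrreducible_of_simple.{u} {k : Type u} [Field k] (V : FDRep k M) [Simple V] :
    IsIrreducible V.ρ := by
  have eq_top (W : Subrepresentation V.ρ) (hW : W ≠ ⊥) : W = ⊤ := by
    let f : FDRep.of W.toRepresentation ⟶ V :=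
      { hom := FGModuleCat.ofHom W.toSubmodule.subtype
        comm := fun _ => rfl }
    have : Mono f := ConcreteCategory.mono_of_injective f W.toSubmodule.subtype_injective
    have f_ne_zero : f ≠ 0 := fun hf => hW <| Subrepresentation.toSubmodule_injective <|
      (Submodule.eq_bot_iff _).2 fun w hw =>
        congrArg (fun t : FDRep.of W.toRepresentation ⟶ V => t.hom.hom ⟨w, hw⟩) hf
    have : IsIso f := isIso_of_mono_of_nonzero f_ne_zero
    have surjective : Function.Surjective W.toSubmodule.subtype :=
      (FDRep.isoToLinearEquiv (asIso f)).surjective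
    exact Subrepresentation.toSubmodule_injective
      (W.toSubmodule.range_subtype ▸ LinearMap.range_eq_top.2 surjective)
  have : Nontrivial (Subrepresentation V.ρ) := ⟨⊥, ⊤, fun h => by
    refine id_nonzero V ?_
    ext v
    have : v ∈ (⊥ : Subrepresentation V.ρ) := h ▸ Submodule.mem_top
    exact this⟩
  exact ⟨fun W => or_iff_not_imp_left.2 (eq_top W)⟩

end Representations

section SymmetricGroups

variable {α : Type*}

theorem invariantFormsSymmetric_fixingSubgroup_compl.{w} {k : Type*} [Field k] [IsAlgClosed k]
    [CharZero k] (s : Finset α) :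
    InvariantFormsSymmetric.{w} k (fixingSubgroup (Equiv.Perm α) (s : Set α)ᶜ) := by
  induction s using Finset.induction_on with
  | empty =>
    have : IsMulCommutative (fixingSubgroup (Equiv.Perm α) ((∅ : Finset α) : Set α)ᶜ) :=
      ⟨⟨fun σ τ => Subtype.ext (Equiv.ext fun i => by
        have fixes (υ : fixingSubgroup (Equiv.Perm α) ((∅ : Finset α) : Set α)ᶜ) :
            (υ : Equiv.Perm α) i = i := (mem_fixingSubgroup_iff _).1 υ.2 i (by simp)
        exact (fixes (σ * τ)).trans (fixes (τ * σ)).symm)⟩⟩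
    exact invariantFormsSymmetric_of_isMulCommutative
  | insert a s _ ih =>
    have compl_subset : ((insert a s : Finset α) : Set α)ᶜ ⊆ (s : Set α)ᶜ :=
      Set.compl_subset_compl.2 (Finset.coe_subset.2 (Finset.subset_insert a s))
    have sdiff_subsingleton :
        ((s : Set α)ᶜ \ ((insert a s : Finset α) : Set α)ᶜ).Subsingleton :=
      (Set.subsingleton_singleton (a := a)).anti (by rw [Finset.coe_insert]; grind)
    have := finite_fixingSubgroup_perm (T := (s : Set α)ᶜ) (by simp)
    refine ih.of_inverting_hom
      (Subgroup.inclusion (fixingSubgroup_antitone _ _ compl_subset)) fun g => ?_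
    obtain ⟨h, hh, hg⟩ := exists_mem_fixingSubgroup_conj_eq_inv
      (pairwise_not_sameCycle_of_mem_fixingSubgroup g.2 sdiff_subsingleton)
    exact ⟨⟨h, hh⟩, Subtype.ext hg⟩

theorem fsInd_character_eq_one_of_eq_fixingSubgroup {S : Subgroup (Equiv.Perm α)} {T : Set α}
    (hS : S = fixingSubgroup (Equiv.Perm α) T) (hT : Tᶜ.Finite) (V : FDRep ℂ S) [Simple V] :
    fsInd V.character = 1 := by
  subst hS
  obtain ⟨s, hs⟩ := hT.exists_finset_coe
  obtain rfl : T = (s : Set α)ᶜ := by rw [hs, compl_compl]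
  have := finite_fixingSubgroup_perm hT
  have := isIrreducible_of_simple V
  exact fsInd_character_eq_one V.ρ isConj_inv_fixingSubgroup
    (invariantFormsSymmetric_fixingSubgroup_compl s V V.ρ)

theorem fixSubgroup_eq_fixingSubgroup (n ℓ : ℕ) :
    fixSubgroup n ℓ = fixingSubgroup (Equiv.Perm (Fin n)) {i : Fin n | ℓ ≤ (i : ℕ)} :=
  Subgroup.ext fun σ => (mem_fixingSubgroup_iff (m := σ) (Equiv.Perm (Fin n))).symm

end SymmetricGroups

theorem stmt_10_general {α : Type*} {T : Set α} (g : Equiv.Perm α) (hT : (T ∪ g • T)ᶜ.Finite) :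
    (∀ V : FDRep ℂ (stabCoset (fixingSubgroup (Equiv.Perm α) T) g), Simple V →
      nuInd (fixingSubgroup (Equiv.Perm α) T) g 2 V.character = 0) ∨
    (∀ V : FDRep ℂ (stabCoset (fixingSubgroup (Equiv.Perm α) T) g), Simple V →
      nuInd (fixingSubgroup (Equiv.Perm α) T) g 2 V.character = 1) := by
  by_cases h : ∀ x ∈ fixingSubgroup (Equiv.Perm α) T,
      (g * x) ^ 2 ∉ stabCoset (fixingSubgroup (Equiv.Perm α) T) g
  · exact .inl fun V _ => nuInd_eq_zero h V.character
  · push Not at h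
    obtain ⟨x, hx, hgx⟩ := h
    obtain ⟨t, ht, htt, hcomm⟩ := exists_involution_centralizing_stabCoset hx hgx
    exact .inr fun V _ => by
      rw [nuInd_two_eq_conj_fsInd ht htt hcomm,
        fsInd_character_eq_one_of_eq_fixingSubgroup (stabCoset_fixingSubgroup T g) hT V, map_one]

/-- For `S_ℓ ⊆ S_n` and any `g ∈ S_n`: either `ν₂(g,χ) = 0` for all irreducible complex
characters `χ` of `S(g)`, or `ν₂(g,χ) = 1` for all such `χ`. -/
theorem stmt_10 (n ℓ : ℕ) (hl : ℓ ≤ n) (g : Equiv.Perm (Fin n)) :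
    (∀ (V : FDRep ℂ ↥(stabCoset (fixSubgroup n ℓ) g)), Simple V →
      nuInd (fixSubgroup n ℓ) g 2 V.character = 0) ∨
    (∀ (V : FDRep ℂ ↥(stabCoset (fixSubgroup n ℓ) g)), Simple V →
      nuInd (fixSubgroup n ℓ) g 2 V.character = 1) := by
  rw [fixSubgroup_eq_fixingSubgroup]
  exact stmt_10_general g (Set.toFinite _)
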